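/- Let m_1, m_2 be positive integers with m_2 ∣ m_1, let r > 0, and let f be a holomorphic function on the open disc {w ∈ ℂ : |w| < r^{m_1}} such that f(w) ≠ 0 for all w ≠ 0 in this disc. Then the set of holomorphic functions h on the disc {z ∈ ℂ : |z| < r} satisfying h(z)^{m_2} = f(z^{m_1}) for all |z| < r has exactly m_2 elements. -/

import Mathlib

/-
Precomposing with `z ↦ z ^ m₁` multiplies the order of vanishing at `0` by `m₁`, so
`F z = f (z ^ m₁)` has the form `z ^ (m₂ * k) * g z` with `g` holomorphic and without zeros. The
disc is simply connected, so `g` has a continuous `m₂`-th root, which is holomorphic because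
`w ↦ w ^ m₂` is a local biholomorphism away from `0`; multiplying it by `z ^ k` gives one root `h₀`
of `F`. If `h` is another one, then `0 = h ^ m₂ - h₀ ^ m₂ = ∏ ζ, (h - ζ * h₀)`, the product being
over the `m₂`-th roots of unity. Since the disc is connected, the analytic functions on it form an
integral domain, hence `h = ζ * h₀` for some `ζ`.
-/

open Filter Function Polynomial Set Topology

section RootsOfAnalyticFunctions

variable {𝕜 A : Type*} [NontriviallyNormedField 𝕜] [NormedCommRing A] [IsDomain A]
  [NormedAlgebra 𝕜 A] {U : Set 𝕜}

lemma exists_eqOn_zero_of_prod_eqOn_zero {ι : Type*} {s : Finset ι} (hs : s.Nonempty)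
    {f : ι → 𝕜 → A} (hU : IsPreconnected U) (hf : ∀ i ∈ s, AnalyticOnNhd 𝕜 (f i) U)
    (hprod : ∀ z ∈ U, ∏ i ∈ s, f i z = 0) :
    ∃ i ∈ s, ∀ z ∈ U, f i z = 0 := by
  induction hs using Finset.Nonempty.cons_induction with
  | singleton i => exact ⟨i, Finset.mem_singleton_self i, by simpa using hprod⟩
  | cons i s hi _ ih =>
    simp only [Finset.prod_cons, Finset.forall_mem_cons] at hprod hf
    rcases hf.1.eq_zero_or_eq_zero_of_mul_eq_zero (s.analyticOnNhd_fun_prod hf.2) hprod hU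
      with h | h
    · exact ⟨i, Finset.mem_cons_self i s, h⟩
    · obtain ⟨j, hj, hfj⟩ := ih hf.2 h
      exact ⟨j, Finset.mem_cons_of_mem hj, hfj⟩

lemma exists_eqOn_rootOfUnity_mul_of_pow_eq {n : ℕ} (hn : 0 < n) {ζ : A} (hζ : IsPrimitiveRoot ζ n)
    {h₁ h₂ : 𝕜 → A} (hU : IsPreconnected U) (hh₁ : AnalyticOnNhd 𝕜 h₁ U)
    (hh₂ : AnalyticOnNhd 𝕜 h₂ U) (hpow : ∀ z ∈ U, h₁ z ^ n = h₂ z ^ n) :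
    ∃ ξ ∈ nthRootsFinset n (1 : A), EqOn h₁ (fun z ↦ ξ * h₂ z) U := by
  have hprod : ∀ z ∈ U, ∏ ξ ∈ nthRootsFinset n (1 : A), (h₁ z - ξ * h₂ z) = 0 := fun z hz ↦ by
    rw [← hζ.pow_sub_pow_eq_prod_sub_mul _ _ hn, hpow z hz, sub_self]
  obtain ⟨ξ, hξ, hzero⟩ := exists_eqOn_zero_of_prod_eqOn_zero
    ⟨1, one_mem_nthRootsFinset hn⟩ hU
    (fun ξ _ ↦ hh₁.sub (analyticOnNhd_const.mul hh₂)) hprod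
  exact ⟨ξ, hξ, fun z hz ↦ sub_eq_zero.mp (hzero z hz)⟩

lemma ncard_domRestrict_analyticOnNhd_pow_eq_pow {n : ℕ} (hn : 0 < n) {ζ : A}
    (hζ : IsPrimitiveRoot ζ n) {h₀ : 𝕜 → A} (hU : IsPreconnected U)
    (hh₀ : AnalyticOnNhd 𝕜 h₀ U) (hne : ∃ z ∈ U, h₀ z ≠ 0) :
    (U.domRestrict ''
      {h : 𝕜 → A | AnalyticOnNhd 𝕜 h U ∧ ∀ z ∈ U, h z ^ n = h₀ z ^ n}).ncard = n := by
  have himage : U.domRestrict '' {h : 𝕜 → A | AnalyticOnNhd 𝕜 h U ∧ ∀ z ∈ U, h z ^ n = h₀ z ^ n} =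
      (fun ξ : A ↦ U.domRestrict fun z ↦ ξ * h₀ z) '' nthRootsFinset n (1 : A) := by
    apply Subset.antisymm
    · rintro _ ⟨h, ⟨hh, hpow⟩, rfl⟩
      obtain ⟨ξ, hξ, heq⟩ := exists_eqOn_rootOfUnity_mul_of_pow_eq hn hζ hU hh hh₀ hpow
      exact ⟨ξ, hξ, (domRestrict_eq_domRestrict_iff.mpr heq).symm⟩
    · rintro _ ⟨ξ, hξ, rfl⟩
      refine ⟨_, ⟨analyticOnNhd_const.mul hh₀, fun z _ ↦ ?_⟩, rfl⟩
      rw [mul_pow, (mem_nthRootsFinset hn _).mp hξ, one_mul]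
  have hinj : Injective fun ξ : A ↦ U.domRestrict fun z ↦ ξ * h₀ z := fun ξ₁ ξ₂ heq ↦ by
    obtain ⟨z, hz, hz₀⟩ := hne
    exact mul_right_cancel₀ hz₀ (domRestrict_eq_domRestrict_iff.mp heq hz)
  rw [himage, ncard_image_of_injective _ hinj, ncard_coe_finset, hζ.card_nthRootsFinset]

end RootsOfAnalyticFunctions

section VanishingOrder

variable {𝕜 E : Type*} [NontriviallyNormedField 𝕜] [NormedAddCommGroup E] [NormedSpace 𝕜 E]

lemma analyticOrderAt_ne_top_of_eventually_ne_zero {f : 𝕜 → E} {c : 𝕜}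
    (hf : ∀ᶠ z in 𝓝[≠] c, f z ≠ 0) : analyticOrderAt f c ≠ ⊤ := fun htop ↦ by
  have hzero : ∀ᶠ z in 𝓝[≠] c, f z = 0 :=
    (analyticOrderAt_eq_top.mp htop).filter_mono nhdsWithin_le_nhds
  obtain ⟨z, hne, heq⟩ := (hf.and hzero).exists
  exact hne heq

lemma analyticOrderNatAt_comp_pow {f : 𝕜 → E} (hf : AnalyticAt 𝕜 f 0) {m : ℕ} (hm : m ≠ 0) :
    analyticOrderNatAt (fun z ↦ f (z ^ m)) 0 = analyticOrderNatAt f 0 * m := by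
  have hpow : analyticOrderAt (fun z : 𝕜 ↦ z ^ m) 0 = m := by
    simpa only [sub_zero, Pi.pow_def] using
      analyticOrderAt_centeredMonomial (z₀ := (0 : 𝕜)) (n := m)
  have hcomp := AnalyticAt.analyticOrderAt_comp (f := f) (g := fun z : 𝕜 ↦ z ^ m) (z₀ := 0)
    (by simpa [hm] using hf) (by fun_prop)
  simp only [zero_pow hm, sub_zero, hpow, comp_def] at hcomp
  simp only [analyticOrderNatAt, hcomp, ENat.toNat_mul, ENat.toNat_natCast]

end VanishingOrder

lemma exists_differentiableOn_eq_pow_smul {E : Type*} [NormedAddCommGroup E] [NormedSpace ℂ E]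
    [CompleteSpace E] {f : ℂ → E} {U : Set ℂ} {c : ℂ} (hU : U ∈ 𝓝 c)
    (hf : DifferentiableOn ℂ f U) (hord : analyticOrderAt f c ≠ ⊤) :
    ∃ g : ℂ → E, DifferentiableOn ℂ g U ∧ g c ≠ 0 ∧
      ∀ z, f z = (z - c) ^ analyticOrderNatAt f c • g z := by
  have hfc : AnalyticAt ℂ f c := hf.analyticAt hU
  have ⟨p, hp⟩ := hfc
  have hp₀ : p ≠ 0 := fun h ↦ hord (analyticOrderAt_eq_top.mpr (hp.locally_zero_iff.mpr h))
  have hdiff : ∀ n, DifferentiableOn ℂ ((swap dslope c)^[n] f) U := fun n ↦ by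
    induction n with
    | zero => exact hf
    | succ n ih =>
      rw [iterate_succ_apply']
      exact (Complex.differentiableOn_dslope hU).mpr ih
  have hgc : (swap dslope c)^[p.order] f c ≠ 0 := hp.iterate_dslope_fslope_ne_zero hp₀
  have hfactor : ∀ z, f z = (z - c) ^ p.order • (swap dslope c)^[p.order] f z :=
    hp.eq_pow_order_mul_iterate_dslope
  have horder : analyticOrderNatAt f c = p.order := (hfc.analyticOrderNatAt_eq_iff hord).mpr
    ⟨_, (hdiff p.order).analyticAt hU, hgc, .of_forall hfactor⟩
  exact ⟨_, hdiff p.order, hgc, horder ▸ hfactor⟩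

section HolomorphicRoots

lemma differentiableAt_of_differentiableAt_comp {𝕜 E F G : Type*} [NontriviallyNormedField 𝕜]
    [NormedAddCommGroup E] [NormedSpace 𝕜 E] [CompleteSpace E]
    [NormedAddCommGroup F] [NormedSpace 𝕜 F] [NormedAddCommGroup G] [NormedSpace 𝕜 G]
    {p : E → F} {p' : E ≃L[𝕜] F} {h : G → E} {a : G}
    (hp : HasStrictFDerivAt p (p' : E →L[𝕜] F) (h a)) (hh : ContinuousAt h a)
    (hph : DifferentiableAt 𝕜 (p ∘ h) a) : DifferentiableAt 𝕜 h a := by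
  have hinv : DifferentiableAt 𝕜 (hp.localInverse p p' (h a)) (p (h a)) :=
    hp.to_localInverse.hasFDerivAt.differentiableAt
  refine (hinv.comp a hph).congr_of_eventuallyEq ?_
  filter_upwards [hh.eventually hp.eventually_left_inverse] with z hz using hz.symm

variable {U : Set ℂ} {n : ℕ}

lemma exists_differentiableOn_pow_eq_of_ne_zero (hU : IsOpen U) (hUc : IsSimplyConnected U)
    (hn : n ≠ 0) {g : ℂ → ℂ} (hg : DifferentiableOn ℂ g U) (hg₀ : ∀ z ∈ U, g z ≠ 0) :
    ∃ h : ℂ → ℂ, DifferentiableOn ℂ h U ∧ ∀ z, h z ^ n = g z := by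
  obtain ⟨h, hcont, hpow⟩ := Complex.exists_continuousOn_pow_eq hUc hU hg.continuousOn
    (by rintro ⟨z, hz, hgz⟩; exact hg₀ z hz hgz) hn
  refine ⟨h, fun z hz ↦ DifferentiableAt.differentiableWithinAt ?_, hpow⟩
  have hz_mem : U ∈ 𝓝 z := hU.mem_nhds hz
  have hhz : h z ≠ 0 := fun h0 ↦ hg₀ z hz (by rw [← hpow z, h0, zero_pow hn])
  have hderiv : (n : ℂ) * h z ^ (n - 1) ≠ 0 :=
    mul_ne_zero (Nat.cast_ne_zero.mpr hn) (pow_ne_zero _ hhz)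
  refine differentiableAt_of_differentiableAt_comp
    ((hasStrictDerivAt_pow n (h z)).hasStrictFDerivAt_equiv hderiv) (hcont.continuousAt hz_mem) ?_
  simpa only [comp_def, hpow] using hg.differentiableAt hz_mem

variable {F : ℂ → ℂ} {c : ℂ}

lemma exists_differentiableOn_pow_eq (hU : IsOpen U) (hUc : IsSimplyConnected U) (hc : c ∈ U)
    (hn : n ≠ 0) (hF : DifferentiableOn ℂ F U) (hF₀ : ∀ z ∈ U, z ≠ c → F z ≠ 0)
    (hdvd : n ∣ analyticOrderNatAt F c) :
    ∃ h : ℂ → ℂ, DifferentiableOn ℂ h U ∧ ∀ z, h z ^ n = F z := by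
  have hU_nhds : U ∈ 𝓝 c := hU.mem_nhds hc
  have hord : analyticOrderAt F c ≠ ⊤ := analyticOrderAt_ne_top_of_eventually_ne_zero <| by
    filter_upwards [nhdsWithin_le_nhds hU_nhds, self_mem_nhdsWithin] using hF₀
  obtain ⟨g, hg, hgc, hFg⟩ := exists_differentiableOn_eq_pow_smul hU_nhds hF hord
  have hg₀ : ∀ z ∈ U, g z ≠ 0 := fun z hz hgz ↦ by
    rcases eq_or_ne z c with rfl | hzc
    · exact hgc hgz
    · exact hF₀ z hz hzc (by rw [hFg, hgz, smul_zero])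
  obtain ⟨h, hh, hpow⟩ := exists_differentiableOn_pow_eq_of_ne_zero hU hUc hn hg hg₀
  obtain ⟨k, hk⟩ := hdvd
  refine ⟨fun z ↦ (z - c) ^ k * h z, by fun_prop, fun z ↦ ?_⟩
  rw [hFg, hk, mul_pow, hpow, smul_eq_mul, ← pow_mul, mul_comm k]

lemma ncard_domRestrict_differentiableOn_pow_eq (hU : IsOpen U) (hUc : IsSimplyConnected U)
    (hc : c ∈ U) (hn : 0 < n) (hF : DifferentiableOn ℂ F U) (hF₀ : ∀ z ∈ U, z ≠ c → F z ≠ 0)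
    (hdvd : n ∣ analyticOrderNatAt F c) :
    (U.domRestrict '' {h : ℂ → ℂ | DifferentiableOn ℂ h U ∧ ∀ z ∈ U, h z ^ n = F z}).ncard = n := by
  obtain ⟨h₀, hh₀, hpow⟩ := exists_differentiableOn_pow_eq hU hUc hc hn.ne' hF hF₀ hdvd
  obtain ⟨z, hzU, hzc⟩ : ∃ z ∈ U, z ≠ c :=
    (((hU.eventually_mem hc).filter_mono nhdsWithin_le_nhds).and
      (self_mem_nhdsWithin : {c}ᶜ ∈ 𝓝[≠] c)).exists
  have hz₀ : h₀ z ≠ 0 := fun h0 ↦ hF₀ z hzU hzc (by rw [← hpow z, h0, zero_pow hn.ne'])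
  simp only [← Complex.analyticOnNhd_iff_differentiableOn hU, ← hpow] at hh₀ ⊢
  exact ncard_domRestrict_analyticOnNhd_pow_eq_pow hn (Complex.isPrimitiveRoot_exp n hn.ne')
    hUc.isPathConnected.isConnected.isPreconnected hh₀ ⟨z, hzU, hz₀⟩

end HolomorphicRoots

lemma isSimplyConnected_of_convex {E : Type*} [AddCommGroup E] [Module ℝ E] [TopologicalSpace E]
    [ContinuousAdd E] [ContinuousSMul ℝ E] {s : Set E} (hs : Convex ℝ s) (hne : s.Nonempty) :
    IsSimplyConnected s :=
  have := hs.contractibleSpace hne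
  inferInstanceAs (SimplyConnectedSpace s)

lemma mapsTo_pow_ball_zero {R : Type*} [SeminormedRing R] (r : ℝ) {m : ℕ} (hm : 0 < m) :
    MapsTo (fun z : R ↦ z ^ m) (Metric.ball 0 r) (Metric.ball 0 (r ^ m)) := fun z hz ↦ by
  rw [mem_ball_zero_iff] at hz ⊢
  exact (norm_pow_le' z hm).trans_lt (pow_lt_pow_left₀ hz (norm_nonneg z) hm.ne')

/-- One-variable lifting lemma: if `m₂ ∣ m₁` and `f` is holomorphic and nonvanishing
away from `0` on the disc of radius `r ^ m₁`, then there are exactly `m₂` holomorphic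
functions `h` on the disc of radius `r` with `h z ^ m₂ = f (z ^ m₁)` (functions are
counted via their restrictions to the disc). -/
theorem one_variable_lifting_count
    (m₁ m₂ : ℕ) (hm₁ : 0 < m₁) (hm₂ : 0 < m₂) (hdvd : m₂ ∣ m₁)
    (r : ℝ) (hr : 0 < r) (f : ℂ → ℂ)
    (hf : DifferentiableOn ℂ f (Metric.ball 0 (r ^ m₁)))
    (hf0 : ∀ w ∈ Metric.ball (0 : ℂ) (r ^ m₁), w ≠ 0 → f w ≠ 0) :
    Set.ncard
      ((fun h => (Metric.ball (0 : ℂ) r).restrict h) ''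
        {h : ℂ → ℂ | DifferentiableOn ℂ h (Metric.ball 0 r) ∧
          ∀ z ∈ Metric.ball (0 : ℂ) r, h z ^ m₂ = f (z ^ m₁)}) = m₂ := by
  have hmaps : MapsTo (fun z : ℂ ↦ z ^ m₁) (Metric.ball 0 r) (Metric.ball 0 (r ^ m₁)) :=
    mapsTo_pow_ball_zero r hm₁
  have hf_analytic : AnalyticAt ℂ f 0 := hf.analyticAt (Metric.ball_mem_nhds 0 (pow_pos hr m₁))
  have horder : m₂ ∣ analyticOrderNatAt (fun z ↦ f (z ^ m₁)) 0 := by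
    rw [analyticOrderNatAt_comp_pow hf_analytic hm₁.ne']
    exact hdvd.mul_left _
  have hdisc : IsSimplyConnected (Metric.ball (0 : ℂ) r) :=
    isSimplyConnected_of_convex (convex_ball 0 r) (Metric.nonempty_ball.mpr hr)
  exact ncard_domRestrict_differentiableOn_pow_eq Metric.isOpen_ball hdisc (Metric.mem_ball_self hr)
    hm₂ (hf.fun_comp (by fun_prop) hmaps)
    (fun z hz hz₀ ↦ hf0 _ (hmaps hz) (pow_ne_zero m₁ hz₀)) horder
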